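/- (Theorem 2: level sets of p(x|y)/v(x) give the smallest-search-time credible region.) Let q : ℝⁿ → ℝ be a nonnegative Lebesgue-integrable function (a posterior density, so typically ∫ q = 1), let v : ℝⁿ → ℝ be a nonnegative measurable function, and let ν be the measure on ℝⁿ with density v with respect to Lebesgue measure. Fix α > 0 and let A = {x : q(x) ≥ α · v(x)} and c = ∫_A q(x) dx. Then A minimises the search time among all regions of posterior credibility at least c: for every measurable set B ⊆ ℝⁿ with ∫_B q(x) dx ≥ c, one has ν(B) ≥ ν(A). -/

import Mathlib

open MeasureTheory ENNReal

/-!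
Only the symmetric difference matters. If `∫_A q ≤ ∫_B q`, then cancelling the common part `A ∩ B`
leaves `∫_{A \ B} q ≤ ∫_{B \ A} q`. Since `α v ≤ q` on `A` and `q < α v` off `A`,
`α ν(A \ B) ≤ ∫_{A \ B} q ≤ ∫_{B \ A} q ≤ α ν(B \ A)`.
Adding back `ν(A ∩ B)`, which may be infinite, gives `ν(A) ≤ ν(B)`.
-/

section

variable {X : Type*} [MeasurableSpace X] {μ : Measure X} {A B S : Set X} {f g q v : X → ℝ}

theorem measure_le_measure_of_sdiff_le_sdiff (hA : NullMeasurableSet A μ)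
    (h : μ (A \ B) ≤ μ (B \ A)) : μ A ≤ μ B :=
  calc
    μ A ≤ μ (A ∩ B) + μ (A \ B) := measure_le_inter_add_sdiff μ A B
    _ ≤ μ (B ∩ A) + μ (B \ A) := by rw [Set.inter_comm]; gcongr
    _ = μ B := measure_inter_add_sdiff₀ B hA

theorem setIntegral_sdiff_le_setIntegral_sdiff_iff
    (hA : NullMeasurableSet A μ) (hB : NullMeasurableSet B μ)
    (hfA : IntegrableOn f A μ) (hfB : IntegrableOn f B μ) :
    ∫ x in A \ B, f x ∂μ ≤ ∫ x in B \ A, f x ∂μ ↔ ∫ x in A, f x ∂μ ≤ ∫ x in B, f x ∂μ := by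
  rw [← integral_inter_add_sdiff₀ hB hfA, ← integral_inter_add_sdiff₀ hA hfB, Set.inter_comm B A,
    add_le_add_iff_left]

theorem ofReal_integral_le_lintegral_ofReal (hf : Integrable f μ) :
    ENNReal.ofReal (∫ x, f x ∂μ) ≤ ∫⁻ x, ENNReal.ofReal (f x) ∂μ := by
  refine ENNReal.ofReal_le_of_le_toReal ?_
  rw [integral_eq_lintegral_pos_part_sub_lintegral_neg_part hf]
  exact sub_le_self _ ENNReal.toReal_nonneg

theorem withDensity_ofReal_le_ofReal_setIntegral (hS : NullMeasurableSet S μ)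
    (hg : IntegrableOn g S μ) (hf_nonneg : 0 ≤ᵐ[μ.restrict S] f) (hfg : f ≤ᵐ[μ.restrict S] g) :
    μ.withDensity (fun x => ENNReal.ofReal (f x)) S ≤ ENNReal.ofReal (∫ x in S, g x ∂μ) := by
  rw [withDensity_apply₀ _ hS, ofReal_integral_eq_lintegral_ofReal hg (hf_nonneg.trans hfg)]
  exact lintegral_mono_ae (hfg.mono fun _ => ENNReal.ofReal_le_ofReal)

theorem ofReal_setIntegral_le_withDensity_ofReal (hf : IntegrableOn f S μ)
    (hfg : f ≤ᵐ[μ.restrict S] g) :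
    ENNReal.ofReal (∫ x in S, f x ∂μ) ≤ μ.withDensity (fun x => ENNReal.ofReal (g x)) S :=
  calc
    ENNReal.ofReal (∫ x in S, f x ∂μ) ≤ ∫⁻ x in S, ENNReal.ofReal (f x) ∂μ :=
      ofReal_integral_le_lintegral_ofReal hf
    _ ≤ ∫⁻ x in S, ENNReal.ofReal (g x) ∂μ :=
      lintegral_mono_ae (hfg.mono fun _ => ENNReal.ofReal_le_ofReal)
    _ ≤ μ.withDensity (fun x => ENNReal.ofReal (g x)) S := withDensity_apply_le _ S

theorem withDensity_ofReal_const_mul {a : ℝ} (ha : 0 ≤ a) :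
    μ.withDensity (fun x => ENNReal.ofReal (a * f x)) =
      ENNReal.ofReal a • μ.withDensity (fun x => ENNReal.ofReal (f x)) := by
  rw [← withDensity_smul' _ _ ENNReal.ofReal_ne_top]
  congr with x
  exact ENNReal.ofReal_mul ha

theorem withDensity_setOf_le_le_of_setIntegral_le (hg : Integrable g μ) (hf : AEMeasurable f μ)
    (hf_nonneg : 0 ≤ᵐ[μ] f) (hB : NullMeasurableSet B μ)
    (hgB : ∫ x in {x | f x ≤ g x}, g x ∂μ ≤ ∫ x in B, g x ∂μ) :
    μ.withDensity (fun x => ENNReal.ofReal (f x)) {x | f x ≤ g x} ≤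
      μ.withDensity (fun x => ENNReal.ofReal (f x)) B := by
  set A := {x | f x ≤ g x}
  set ν := μ.withDensity (fun x => ENNReal.ofReal (f x))
  have hA : NullMeasurableSet A μ := nullMeasurableSet_le hf hg.aemeasurable
  have le_on_sdiff : f ≤ᵐ[μ.restrict (A \ B)] g :=
    (ae_restrict_mem₀ (hA.diff hB)).mono fun _ hx => hx.1
  have ge_on_sdiff : g ≤ᵐ[μ.restrict (B \ A)] f :=
    (ae_restrict_mem₀ (hB.diff hA)).mono fun _ hx => (not_le.mp hx.2).le
  refine measure_le_measure_of_sdiff_le_sdiff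
    (hA.mono_ac (withDensity_absolutelyContinuous _ _)) ?_
  calc
    ν (A \ B) ≤ ENNReal.ofReal (∫ x in A \ B, g x ∂μ) :=
      withDensity_ofReal_le_ofReal_setIntegral (hA.diff hB) hg.integrableOn
        (ae_restrict_of_ae hf_nonneg) le_on_sdiff
    _ ≤ ENNReal.ofReal (∫ x in B \ A, g x ∂μ) :=
      ENNReal.ofReal_le_ofReal <|
        (setIntegral_sdiff_le_setIntegral_sdiff_iff hA hB hg.integrableOn hg.integrableOn).mpr hgB
    _ ≤ ν (B \ A) := ofReal_setIntegral_le_withDensity_ofReal hg.integrableOn ge_on_sdiff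

theorem superlevel_set_minimises_search_time_general
    (hq : Integrable q μ) (hv : AEMeasurable v μ) (hv_nonneg : 0 ≤ᵐ[μ] v)
    {α : ℝ} (hα : 0 < α) (hB : NullMeasurableSet B μ)
    (hqB : ∫ x in {x | α * v x ≤ q x}, q x ∂μ ≤ ∫ x in B, q x ∂μ) :
    μ.withDensity (fun x => ENNReal.ofReal (v x)) {x | α * v x ≤ q x} ≤
      μ.withDensity (fun x => ENNReal.ofReal (v x)) B := by
  have scaled := withDensity_setOf_le_le_of_setIntegral_le hq (hv.const_mul α)
    (hv_nonneg.mono fun _ hx => mul_nonneg hα.le hx) hB hqB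
  rw [withDensity_ofReal_const_mul hα.le] at scaled
  exact (ENNReal.mul_le_mul_iff_right (ENNReal.ofReal_pos.mpr hα).ne' ENNReal.ofReal_ne_top).mp
    scaled

end

/-- Theorem 2: the superlevel set `A = {x : q(x) ≥ α · v(x)}` of the
ratio of the posterior density `q` to the search difficulty `v` has the smallest search
time `ν(A)` among all credible regions of level `c = ∫_A q`: every measurable `B` with
`∫_B q ≥ c` satisfies `ν(B) ≥ ν(A)`, where `ν` has density `v` w.r.t. Lebesgue
measure. -/
theorem superlevel_set_minimises_search_time {n : ℕ}
    (q v : EuclideanSpace ℝ (Fin n) → ℝ)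
    (hq_meas : Measurable q) (hq_nonneg : ∀ x, 0 ≤ q x) (hq_int : Integrable q)
    (hv_meas : Measurable v) (hv_nonneg : ∀ x, 0 ≤ v x)
    (ν : Measure (EuclideanSpace ℝ (Fin n)))
    (hν : ν = volume.withDensity (fun x => ENNReal.ofReal (v x)))
    (α : ℝ) (hα : 0 < α)
    (A : Set (EuclideanSpace ℝ (Fin n))) (hA : A = {x | α * v x ≤ q x})
    (c : ℝ) (hc : c = ∫ x in A, q x) :
    ∀ B : Set (EuclideanSpace ℝ (Fin n)), MeasurableSet B →
      c ≤ ∫ x in B, q x → ν A ≤ ν B := by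
  subst hν hA hc
  exact fun B hB => superlevel_set_minimises_search_time_general hq_int hv_meas.aemeasurable
    (.of_forall hv_nonneg) hα hB.nullMeasurableSet
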